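/- arXiv:2001.07151 — 7 statements merged into one kernel-verified Lean document; each statement's English description precedes it below -/
import Mathlib

section
/- For all integers i ≥ 0 and j ≥ 2 and all h > 0, J_{i,j}(h) = (j/(i+j+1)) · h · J_{i,j−2}(h) − (((−1)^{i+3j+1} − 1)/(i+j+1)) · σ(h)^{i+3j+1}. -/
/-!
The identity is the integral over a half turn of the derivative of `cos^(i+1) * sin^j`: by
`cos² = 1 - sin²` that derivative is a combination of `cosⁱ sin^(j-1)` and `cosⁱ sin^(j+1)`
(`hasDerivAt_cos_pow_mul_sin_pow`). The half turn multiplies the boundary term by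
`(-1)^(i+j+1) = (-1)^(i+3j+1)`, and `√h * cos τ = σ`, `√h * sin τ = σ³` identify its size as
`σ^(i+3j+1)`, because `(σ, σ³)` is the point of the circle of radius `√h` at angle `τ`.
-/

open MeasureTheory intervalIntegral

/-- `τ(h) = arctan(σ(h)²)`, the angle of the intersection point of the circle
`x² + y² = h` with the switching curve `y = x³`. -/
noncomputable def tau (σ : ℝ → ℝ) (h : ℝ) : ℝ := Real.arctan ((σ h) ^ 2)

/-- `J i j h = h^((i+j+1)/2) ∫_{τ(h)}^{τ(h)+π} cosⁱθ sin^{j+1}θ dθ = ∫_{L_h⁺} xⁱ yʲ dx`. -/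
noncomputable def J (σ : ℝ → ℝ) (i j : ℕ) (h : ℝ) : ℝ :=
  h ^ (((i : ℝ) + (j : ℝ) + 1) / 2) *
    ∫ θ in tau σ h..(tau σ h + Real.pi), Real.cos θ ^ i * Real.sin θ ^ (j + 1)

/-- `I i j h = h^((i+j+1)/2) ∫_{τ(h)-π}^{τ(h)} cosⁱθ sin^{j+1}θ dθ = ∫_{L_h⁻} xⁱ yʲ dx`. -/
noncomputable def I (σ : ℝ → ℝ) (i j : ℕ) (h : ℝ) : ℝ :=
  h ^ (((i : ℝ) + (j : ℝ) + 1) / 2) *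
    ∫ θ in (tau σ h - Real.pi)..tau σ h, Real.cos θ ^ i * Real.sin θ ^ (j + 1)

theorem hasDerivAt_cos_pow_mul_sin_pow (i n : ℕ) (x : ℝ) :
    HasDerivAt (fun y => Real.cos y ^ (i + 1) * Real.sin y ^ (n + 2))
      (((n : ℝ) + 2) * (Real.cos x ^ i * Real.sin x ^ (n + 1)) -
        ((i : ℝ) + n + 3) * (Real.cos x ^ i * Real.sin x ^ (n + 3))) x := by
  have h := ((Real.hasDerivAt_cos x).fun_pow (i + 1)).fun_mul
    ((Real.hasDerivAt_sin x).fun_pow (n + 2))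
  refine h.congr_deriv ?_
  push_cast
  linear_combination
    ((n : ℝ) + 2) * Real.cos x ^ i * Real.sin x ^ (n + 1) * Real.cos_sq' x

/-- The trigonometric core of the reduction, over any half turn `[a, a + π]`. -/
theorem integral_cos_pow_mul_sin_pow_half_turn (i n : ℕ) (a : ℝ) :
    ((n : ℝ) + 2) * (∫ θ in a..(a + Real.pi), Real.cos θ ^ i * Real.sin θ ^ (n + 1)) -
        ((i : ℝ) + n + 3) * (∫ θ in a..(a + Real.pi), Real.cos θ ^ i * Real.sin θ ^ (n + 3)) =
      ((-1) ^ (i + n + 3) - 1) * (Real.cos a ^ (i + 1) * Real.sin a ^ (n + 2)) := by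
  have hint : ∀ (c : ℝ) (k : ℕ), IntervalIntegrable
      (fun θ => c * (Real.cos θ ^ i * Real.sin θ ^ k)) volume a (a + Real.pi) :=
    fun c k => Continuous.intervalIntegrable (by fun_prop) _ _
  have h := intervalIntegral.integral_eq_sub_of_hasDerivAt
    (fun x _ => hasDerivAt_cos_pow_mul_sin_pow i n x) ((hint _ _).sub (hint _ _))
  rw [intervalIntegral.integral_sub (hint _ _) (hint _ _), intervalIntegral.integral_const_mul,
    intervalIntegral.integral_const_mul, Real.cos_add_pi, Real.sin_add_pi,
    neg_pow (Real.cos a), neg_pow (Real.sin a)] at h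
  rw [h]
  ring

theorem sqrt_mul_cos_sin_arctan_sq {u h : ℝ} (hu : 0 < u) (huh : u ^ 2 + u ^ 6 = h) :
    √h * Real.cos (Real.arctan (u ^ 2)) = u ∧ √h * Real.sin (Real.arctan (u ^ 2)) = u ^ 3 := by
  have hs : √h = u * √(1 + (u ^ 2) ^ 2) := by
    rw [← huh, show u ^ 2 + u ^ 6 = u ^ 2 * (1 + (u ^ 2) ^ 2) by ring,
      Real.sqrt_mul (sq_nonneg u), Real.sqrt_sq hu.le]
  have hpos : 0 < √(1 + (u ^ 2) ^ 2) := by positivity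
  rw [Real.cos_arctan, Real.sin_arctan, hs]
  constructor <;> field_simp

/-- Reduction formula (3.10): lowering the second index by 2. -/
theorem J_reduction_second_index (σ : ℝ → ℝ)
    (hσ : ∀ h : ℝ, 0 < h → 0 < σ h ∧ (σ h) ^ 2 + (σ h) ^ 6 = h)
    (i j : ℕ) (hj : 2 ≤ j) (h : ℝ) (hh : 0 < h) :
    J σ i j h =
      ((j : ℝ) / ((i : ℝ) + (j : ℝ) + 1)) * h * J σ i (j - 2) h -
        (((-1 : ℝ) ^ (i + 3 * j + 1) - 1) / ((i : ℝ) + (j : ℝ) + 1)) *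
          (σ h) ^ (i + 3 * j + 1) := by
  obtain ⟨n, rfl⟩ := Nat.exists_eq_add_of_le' hj
  obtain ⟨hu, huh⟩ := hσ h hh
  obtain ⟨hc, hs⟩ := sqrt_mul_cos_sin_arctan_sq hu huh
  have hpow : ∀ m : ℕ, h ^ ((m : ℝ) / 2) = √h ^ m := fun m => by
    rw [← Real.rpow_natCast, Real.sqrt_eq_rpow, ← Real.rpow_mul hh.le]
    congr 1
    ring
  have hI := integral_cos_pow_mul_sin_pow_half_turn i n (tau σ h)
  have hsign : (-1 : ℝ) ^ (i + 3 * (n + 2) + 1) = (-1) ^ (i + n + 3) := by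
    rw [show i + 3 * (n + 2) + 1 = (i + n + 3) + 2 * (n + 2) by ring, pow_add, pow_mul]
    simp
  have hbdry : √h ^ (i + n + 3) * (Real.cos (tau σ h) ^ (i + 1) * Real.sin (tau σ h) ^ (n + 2)) =
      σ h ^ (i + 3 * (n + 2) + 1) := by
    calc _ = (√h * Real.cos (tau σ h)) ^ (i + 1) * (√h * Real.sin (tau σ h)) ^ (n + 2) := by ring
      _ = σ h ^ (i + 1) * (σ h ^ 3) ^ (n + 2) := by rw [tau, hc, hs]
      _ = _ := by ring
  have hlow : √h ^ (i + n + 3) = h * √h ^ (i + n + 1) := by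
    rw [pow_succ, pow_succ, mul_assoc, Real.mul_self_sqrt hh.le, mul_comm]
  have hne : (i : ℝ) + n + 3 ≠ 0 := by positivity
  unfold J
  rw [Nat.add_sub_cancel, hsign, ← hbdry,
    show ((i : ℝ) + ((n + 2 : ℕ) : ℝ) + 1) = ((i + n + 3 : ℕ) : ℝ) by push_cast; ring,
    show ((i : ℝ) + (n : ℝ) + 1) = ((i + n + 1 : ℕ) : ℝ) by push_cast; ring, hpow, hpow]
  push_cast
  field_simp
  rw [hlow]
  linear_combination (-(h * √h ^ (i + n + 1))) * hI
end

section
/- For every h > 0 the following identities hold: J_{4,0}(h) = (1/5)h²J_{0,0}(h) − (2/5)h·σ(h)⁷ − (2/5)σ(h)⁹; J_{3,1}(h) = (2/5)h·J_{1,1}(h) − (2/5)σ(h)¹¹; J_{2,2}(h) = (2/15)h²J_{0,0}(h) − (4/15)h·σ(h)⁷ + (2/5)σ(h)⁹; J_{1,3}(h) = (3/5)h·J_{1,1}(h) + (2/5)σ(h)¹¹; and J_{0,4}(h) = (8/15)h²J_{0,0}(h) + (8/15)h·σ(h)⁷ + (2/5)σ(h)¹³. -/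
/-!
In every integral of total degree four, one of the exponents of `cos` and `sin` is odd, so the
substitution `u = cos θ` or `u = sin θ` turns it into the integral of a polynomial. The half turn
negates both `cos` and `sin`, so that integral runs over an interval symmetric about `0`, bounded
by `± cos τ` or `± sin τ`. Since `√h cos τ = σ` and `√h sin τ = σ³`, each `J` becomes a polynomial
in `h` and `σ` (`J_closed_forms`). Substituting `h = σ² + σ⁶` reduces each identity to one between
polynomials in `σ`.
-/

open MeasureTheory intervalIntegral

/-- The angle `τ(h)` is the polar angle of the point `(σ(h), σ(h)³)` on the circle of
radius `√h`. -/
lemma sqrt_mul_cos_sin_tau (σ : ℝ → ℝ) (h : ℝ) (hs : 0 < σ h)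
    (he : σ h ^ 2 + σ h ^ 6 = h) :
    √h * Real.cos (tau σ h) = σ h ∧ √h * Real.sin (tau σ h) = σ h ^ 3 := by
  have hr : √h = σ h * √(1 + (σ h ^ 2) ^ 2) := by
    calc √h = √(σ h ^ 2 * (1 + (σ h ^ 2) ^ 2)) := by
          congr 1
          linear_combination -he
      _ = _ := by rw [Real.sqrt_mul (by positivity), Real.sqrt_sq hs.le]
  have hq : √(1 + (σ h ^ 2) ^ 2) ≠ 0 := by positivity
  rw [tau, Real.cos_arctan, Real.sin_arctan, hr]
  constructor <;> field_simp

/-- An odd power of `sin` is removed by the substitution `u = cos θ`. -/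
lemma J_even_right (σ : ℝ → ℝ) (i m : ℕ) (h : ℝ) (hh : 0 < h) :
    J σ i (2 * m) h = √h ^ (i + 2 * m + 1) *
      ∫ u in (-Real.cos (tau σ h))..Real.cos (tau σ h), u ^ i * (1 - u ^ 2) ^ m := by
  rw [J, Real.rpow_div_two_eq_sqrt _ hh.le]
  simp_rw [mul_comm (Real.cos _ ^ _)]
  rw [integral_sin_pow_odd_mul_cos_pow, Real.cos_add_pi]
  congr 1
  exact_mod_cast Real.rpow_natCast (√h) (i + 2 * m + 1)

/-- An odd power of `cos` is removed by the substitution `u = sin θ`. -/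
lemma J_odd_left (σ : ℝ → ℝ) (n j : ℕ) (h : ℝ) (hh : 0 < h) :
    J σ (2 * n + 1) j h = √h ^ (2 * n + 1 + j + 1) *
      ∫ u in (Real.sin (tau σ h))..(-Real.sin (tau σ h)), u ^ (j + 1) * (1 - u ^ 2) ^ n := by
  rw [J, Real.rpow_div_two_eq_sqrt _ hh.le]
  simp_rw [mul_comm (Real.cos _ ^ _)]
  rw [integral_sin_pow_mul_cos_pow_odd, Real.sin_add_pi]
  congr 1
  exact_mod_cast Real.rpow_natCast (√h) (2 * n + 1 + j + 1)

lemma integral_of_eq_three_terms (f : ℝ → ℝ) (a b d x y : ℝ) (k : ℕ)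
    (hf : ∀ u, f u = a * u ^ k + b * u ^ (k + 2) + d * u ^ (k + 4)) :
    ∫ u in x..y, f u =
      a * ((y ^ (k + 1) - x ^ (k + 1)) / (k + 1)) +
      b * ((y ^ (k + 3) - x ^ (k + 3)) / (k + 3)) +
      d * ((y ^ (k + 5) - x ^ (k + 5)) / (k + 5)) := by
  simp_rw [hf]
  rw [intervalIntegral.integral_add (Continuous.intervalIntegrable (by fun_prop) _ _)
      (Continuous.intervalIntegrable (by fun_prop) _ _),
    intervalIntegral.integral_add (Continuous.intervalIntegrable (by fun_prop) _ _)
      (Continuous.intervalIntegrable (by fun_prop) _ _)]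
  simp only [intervalIntegral.integral_const_mul, integral_pow]
  push_cast
  ring

/-- Each integral that occurs in the identities, as a polynomial in `h` and `σ(h)`. -/
lemma J_closed_forms (σ : ℝ → ℝ) (h : ℝ) (hh : 0 < h) (hs : 0 < σ h)
    (he : σ h ^ 2 + σ h ^ 6 = h) :
    J σ 0 0 h = 2 * σ h ∧
    J σ 1 1 h = -(2 / 3) * σ h ^ 9 ∧
    J σ 4 0 h = 2 / 5 * σ h ^ 5 ∧
    J σ 3 1 h = -(2 / 3) * h * σ h ^ 9 + 2 / 5 * σ h ^ 15 ∧
    J σ 2 2 h = 2 / 3 * h * σ h ^ 3 - 2 / 5 * σ h ^ 5 ∧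
    J σ 1 3 h = -(2 / 5) * σ h ^ 15 ∧
    J σ 0 4 h = 2 * h ^ 2 * σ h - 4 / 3 * h * σ h ^ 3 + 2 / 5 * σ h ^ 5 := by
  obtain ⟨hc, hd⟩ := sqrt_mul_cos_sin_tau σ h hs he
  have hr : h = √h ^ 2 := (Real.sq_sqrt hh.le).symm
  have h15 : σ h ^ 15 = (√h * Real.sin (tau σ h)) ^ 5 := by rw [hd]; ring
  have h9 : σ h ^ 9 = (√h * Real.sin (tau σ h)) ^ 3 := by rw [hd]; ring
  have e00 := J_even_right σ 0 0 h hh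
  have e40 := J_even_right σ 4 0 h hh
  have e22 := J_even_right σ 2 1 h hh
  have e04 := J_even_right σ 0 2 h hh
  have e11 := J_odd_left σ 0 1 h hh
  have e31 := J_odd_left σ 1 1 h hh
  have e13 := J_odd_left σ 0 3 h hh
  norm_num only at e00 e40 e22 e04 e11 e31 e13
  rw [e00, e40, e22, e04, e11, e31, e13, h15, h9, ← hc]
  generalize Real.cos (tau σ h) = c at *
  generalize Real.sin (tau σ h) = d at *
  generalize √h = r at *
  subst hr
  refine ⟨?_, ?_, ?_, ?_, ?_, ?_, ?_⟩
  · rw [integral_of_eq_three_terms _ 1 0 0 _ _ 0]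
    · push_cast
      ring
    · intro u
      ring
  · rw [integral_of_eq_three_terms _ 1 0 0 _ _ 2]
    · push_cast
      ring
    · intro u
      ring
  · rw [integral_of_eq_three_terms _ 1 0 0 _ _ 4]
    · push_cast
      ring
    · intro u
      ring
  · rw [integral_of_eq_three_terms _ 1 (-1) 0 _ _ 2]
    · push_cast
      ring
    · intro u
      ring
  · rw [integral_of_eq_three_terms _ 1 (-1) 0 _ _ 2]
    · push_cast
      ring
    · intro u
      ring
  · rw [integral_of_eq_three_terms _ 1 0 0 _ _ 4]
    · push_cast
      ring
    · intro u
      ring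
  · rw [integral_of_eq_three_terms _ 1 (-2) 1 _ _ 0]
    · push_cast
      ring
    · intro u
      ring

/-- Explicit reductions of the degree-four integrals `J_{i,j}`, `i + j = 4`. -/
theorem J_degree_four_identities (σ : ℝ → ℝ)
    (hσ : ∀ h : ℝ, 0 < h → 0 < σ h ∧ (σ h) ^ 2 + (σ h) ^ 6 = h)
    (h : ℝ) (hh : 0 < h) :
    J σ 4 0 h = (1 / 5) * h ^ 2 * J σ 0 0 h - (2 / 5) * h * (σ h) ^ 7 - (2 / 5) * (σ h) ^ 9 ∧
    J σ 3 1 h = (2 / 5) * h * J σ 1 1 h - (2 / 5) * (σ h) ^ 11 ∧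
    J σ 2 2 h = (2 / 15) * h ^ 2 * J σ 0 0 h - (4 / 15) * h * (σ h) ^ 7 + (2 / 5) * (σ h) ^ 9 ∧
    J σ 1 3 h = (3 / 5) * h * J σ 1 1 h + (2 / 5) * (σ h) ^ 11 ∧
    J σ 0 4 h = (8 / 15) * h ^ 2 * J σ 0 0 h + (8 / 15) * h * (σ h) ^ 7 + (2 / 5) * (σ h) ^ 13 := by
  obtain ⟨hs, he⟩ := hσ h hh
  obtain ⟨e00, e11, e40, e31, e22, e13, e04⟩ := J_closed_forms σ h hh hs he
  rw [e00, e11, e40, e31, e22, e13, e04]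
  generalize σ h = s at *
  subst he
  refine ⟨?_, ?_, ?_, ?_, ?_⟩ <;> ring
end

section
/- Let i, j ≥ 0 be integers with i + j = 2l even, l ≥ 2. Then there exist real constants α, β and real polynomials φ_0, …, φ_{3l−3} with deg φ_m ≤ l − 1 − ⌊(m+2)/3⌋ for each m, such that for all h > 0, J_{i,j}(h) = α h^l J_{0,0}(h) + β h^{l−1} J_{1,1}(h) + Σ_{m=0}^{3l−3} φ_m(h) · σ(h)^{7+2m}. -/
/-!
Put `u = σ h`. The relation `u² + u⁶ = h` says `√h cos τ = u` and `√h sin τ = u³`. When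
`i + j = 2l`, exactly one of `i`, `j + 1` is odd, so the integral defining `J i j` becomes, after
substituting the sine or the cosine, the integral of an even polynomial over a symmetric interval.
Hence `J i j h` is a combination of the terms `h^(l-r) u^(2r+1)`, `0 ≤ r ≤ l` (for `i` even), or of
the terms `h^(l-r) u^(6r+3)`, `1 ≤ r ≤ l` (for `i` odd). In particular `J 0 0 h = 2u` and
`J 1 1 h = -(2/3) u⁹`.

It remains to see that each term has the required form (`good_cos_term`, `good_sin_term`). The
terms outside the admissible range are rewritten with `u⁶ = h - u²`:
`h^(l-1) u³ = h^l u - h^(l-1) u⁷`, `h^(l-2) u⁵ = h^(l-1) u³ - h^(l-2) u⁹`, and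
`h^(l-r-1) u^(6r+9) = h^(l-r) u^(6r+3) - h^(l-r-1) u^(6r+5)`, the last one leading down to
`h^(l-1) u⁹`, which is a multiple of `h^(l-1) J 1 1 h`.
-/


open MeasureTheory intervalIntegral

/-- The functions of `h > 0` that have the asserted form, with `J 0 0` and `J 1 1` replaced by the
monomials `σ` and `σ⁹` to which they are proportional. -/
def Good (σ : ℝ → ℝ) (l : ℕ) (f : ℝ → ℝ) : Prop :=
  ∃ (α β : ℝ) (φ : ℕ → Polynomial ℝ),
    (∀ m ≤ 3 * l - 3, (φ m).natDegree ≤ l - 1 - (m + 2) / 3) ∧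
    ∀ h : ℝ, 0 < h →
      f h = α * (h ^ l * σ h) + β * (h ^ (l - 1) * σ h ^ 9) +
          ∑ m ∈ Finset.range (3 * l - 2), (φ m).eval h * (σ h) ^ (7 + 2 * m)

namespace Good

variable {σ : ℝ → ℝ} {l : ℕ} {f g : ℝ → ℝ}

theorem congr (hf : Good σ l f) (hfg : ∀ h, 0 < h → g h = f h) : Good σ l g := by
  obtain ⟨α, β, φ, hd, he⟩ := hf
  exact ⟨α, β, φ, hd, fun h hh => (hfg h hh).trans (he h hh)⟩

theorem sub (hf : Good σ l f) (hg : Good σ l g) : Good σ l (fun h => f h - g h) := by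
  obtain ⟨α, β, φ, hd, he⟩ := hf
  obtain ⟨α', β', φ', hd', he'⟩ := hg
  refine ⟨α - α', β - β', fun m => φ m - φ' m, fun m hm => ?_, fun h hh => ?_⟩
  · exact (Polynomial.natDegree_sub_le _ _).trans (max_le (hd m hm) (hd' m hm))
  · simp only [he h hh, he' h hh, Polynomial.eval_sub, sub_mul, Finset.sum_sub_distrib]
    ring

theorem smul (c : ℝ) (hf : Good σ l f) : Good σ l (fun h => c * f h) := by
  obtain ⟨α, β, φ, hd, he⟩ := hf
  refine ⟨c * α, c * β, fun m => Polynomial.C c * φ m, fun m hm => ?_, fun h hh => ?_⟩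
  · exact (Polynomial.natDegree_C_mul_le _ _).trans (hd m hm)
  · simp only [he h hh, Polynomial.eval_mul, Polynomial.eval_C, mul_add, Finset.mul_sum, mul_assoc]

theorem alpha (σ : ℝ → ℝ) (l : ℕ) : Good σ l (fun h => h ^ l * σ h) :=
  ⟨1, 0, fun _ => 0, by simp, by simp⟩

theorem beta (σ : ℝ → ℝ) (l : ℕ) : Good σ l (fun h => h ^ (l - 1) * σ h ^ 9) :=
  ⟨0, 1, fun _ => 0, by simp, by simp⟩

theorem mono (σ : ℝ → ℝ) {l k m : ℕ} (hm : m < 3 * l - 2) (hk : k ≤ l - 1 - (m + 2) / 3) :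
    Good σ l (fun h => h ^ k * σ h ^ (7 + 2 * m)) := by
  refine ⟨0, 0, fun n => if n = m then Polynomial.X ^ k else 0, fun n _ => ?_, fun h _ => ?_⟩
  · dsimp only
    split_ifs with hn
    · subst hn
      simpa using hk
    · simp
  · dsimp only
    rw [Finset.sum_eq_single_of_mem m (Finset.mem_range.2 hm)]
    · simp
    · intro b _ hb
      simp [hb]

end Good

section Terms

variable {σ : ℝ → ℝ} (hσ : ∀ h : ℝ, 0 < h → 0 < σ h ∧ (σ h) ^ 2 + (σ h) ^ 6 = h)
  {l : ℕ} (hl : 2 ≤ l)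

include hσ hl

theorem good_cos_term {r : ℕ} (hr : r ≤ l) :
    Good σ l (fun h => h ^ (l - r) * σ h ^ (2 * r + 1)) := by
  have h1 : Good σ l (fun h => h ^ (l - 1) * σ h ^ 3) := by
    refine ((Good.alpha σ l).sub (Good.mono σ (l := l) (k := l - 1) (m := 0)
      (by omega) (by omega))).congr fun h hh => ?_
    obtain ⟨n, rfl⟩ : ∃ n, l = n + 1 := ⟨l - 1, by omega⟩
    simp only [Nat.add_sub_cancel]
    linear_combination (h ^ n * σ h) * (hσ h hh).2
  rcases Nat.lt_or_ge r 3 with h3 | h3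
  · interval_cases r
    · exact (Good.alpha σ l).congr fun h _ => by simp
    · exact h1
    · refine (h1.sub (Good.mono σ (l := l) (k := l - 2) (m := 1)
        (by omega) (by omega))).congr fun h hh => ?_
      obtain ⟨n, rfl⟩ : ∃ n, l = n + 2 := ⟨l - 2, by omega⟩
      have e : n + 2 - 1 = n + 1 := by omega
      simp only [Nat.add_sub_cancel, e]
      linear_combination (h ^ n * σ h ^ 3) * (hσ h hh).2
  · refine (Good.mono σ (l := l) (k := l - r) (m := r - 3) (by omega) (by omega)).congr
      fun h _ => ?_
    rw [show 7 + 2 * (r - 3) = 2 * r + 1 by omega]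

theorem good_sin_term {r : ℕ} (hr1 : 1 ≤ r) (hr : r ≤ l) :
    Good σ l (fun h => h ^ (l - r) * (σ h ^ 3) ^ (2 * r + 1)) := by
  induction r, hr1 using Nat.le_induction with
  | base => exact (Good.beta σ l).congr fun h _ => by ring
  | succ r hr1 ih =>
    refine ((ih (by omega)).sub (Good.mono σ (l := l) (k := l - (r + 1)) (m := 3 * r - 1)
      (by omega) (by omega))).congr fun h hh => ?_
    obtain ⟨n, rfl⟩ : ∃ n, l = n + (r + 1) := ⟨l - (r + 1), by omega⟩
    have e : n + (r + 1) - r = n + 1 := by omega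
    have e' : 7 + 2 * (3 * r - 1) = 6 * r + 5 := by omega
    simp only [Nat.add_sub_cancel, e, e']
    linear_combination (h ^ n * σ h ^ (6 * r + 3)) * (hσ h hh).2

omit hσ hl

theorem integral_symm_even_pow (a : ℝ) (p : ℕ) :
    ∫ x in (-a)..a, x ^ (2 * p) = 2 / (2 * p + 1) * a ^ (2 * p + 1) := by
  rw [integral_pow, Odd.neg_pow ⟨p, rfl⟩]
  push_cast
  ring

/-- If `√h · a(h) = g(h)` and all the terms `h^(l-r) g(h)^(2r+1)` with `p ≤ r ≤ l` have the asserted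
form, then so do the integrals of `x^(2p) (1 - x²)^q` over `[-a, a]`, scaled by `h^(l+1/2)`. -/
theorem good_integral {a g : ℝ → ℝ} (hag : ∀ h, 0 < h → √h * a h = g h) (q : ℕ) :
    ∀ p : ℕ, p + q ≤ l →
      (∀ r, p ≤ r → r ≤ l → Good σ l (fun h => h ^ (l - r) * g h ^ (2 * r + 1))) →
      Good σ l (fun h => h ^ l * √h * ∫ x in (-a h)..a h, x ^ (2 * p) * (1 - x ^ 2) ^ q) := by
  induction q with
  | zero =>
    intro p hp hg
    refine ((hg p le_rfl hp).smul (2 / (2 * p + 1))).congr fun h hh => ?_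
    simp only [pow_zero, mul_one, integral_symm_even_pow]
    have hs : √h ^ 2 = h := Real.sq_sqrt hh.le
    have e : h ^ l = h ^ (l - p) * √h ^ (2 * p) := by
      rw [pow_mul, hs, ← pow_add]
      congr 1
      omega
    rw [e, ← hag h hh]
    ring
  | succ q ih =>
    intro p hp hg
    refine ((ih p (by omega) hg).sub
      (ih (p + 1) (by omega) fun r hr => hg r (by omega))).congr fun h hh => ?_
    rw [← mul_sub, ← intervalIntegral.integral_sub
      (Continuous.intervalIntegrable (by fun_prop) _ _)
      (Continuous.intervalIntegrable (by fun_prop) _ _)]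
    congr 2
    ext x
    ring

end Terms

theorem sqrt_mul_cos_tau {u h : ℝ} (hu : 0 < u) (h_eq : u ^ 2 + u ^ 6 = h) :
    √h * Real.cos (Real.arctan (u ^ 2)) = u := by
  have e : h = u ^ 2 * (1 + (u ^ 2) ^ 2) := by rw [← h_eq]; ring
  have hp : 0 < √(1 + (u ^ 2) ^ 2) := Real.sqrt_pos.2 (by positivity)
  rw [Real.cos_arctan, e, Real.sqrt_mul (by positivity), Real.sqrt_sq hu.le]
  field_simp

theorem sqrt_mul_sin_tau {u h : ℝ} (hu : 0 < u) (h_eq : u ^ 2 + u ^ 6 = h) :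
    √h * Real.sin (Real.arctan (u ^ 2)) = u ^ 3 := by
  have e : Real.sin (Real.arctan (u ^ 2)) = u ^ 2 * Real.cos (Real.arctan (u ^ 2)) := by
    rw [Real.sin_arctan, Real.cos_arctan]
    ring
  rw [e]
  linear_combination u ^ 2 * sqrt_mul_cos_tau hu h_eq

theorem rpow_half {h : ℝ} (hh : 0 < h) {i j l : ℕ} (hij : i + j = 2 * l) :
    h ^ (((i : ℝ) + (j : ℝ) + 1) / 2) = h ^ l * √h := by
  have e : ((i : ℝ) + (j : ℝ) + 1) / 2 = (l : ℝ) + 1 / 2 := by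
    have : (i : ℝ) + j = 2 * l := by exact_mod_cast hij
    rw [this]
    ring
  rw [e, Real.rpow_add hh, Real.rpow_natCast, Real.sqrt_eq_rpow]

/-- For even exponents the substitution `x = cos θ` applies. -/
theorem J_cos (σ : ℝ → ℝ) {p q l : ℕ} (hpq : p + q = l) {h : ℝ} (hh : 0 < h) :
    J σ (2 * p) (2 * q) h = h ^ l * √h *
      ∫ x in (-Real.cos (tau σ h))..Real.cos (tau σ h), x ^ (2 * p) * (1 - x ^ 2) ^ q := by
  rw [J, rpow_half hh (l := l) (by omega)]
  congr 1
  have := integral_sin_pow_odd_mul_cos_pow (a := tau σ h) (b := tau σ h + Real.pi) q (2 * p)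
  rw [Real.cos_add_pi] at this
  rw [← this]
  simp only [mul_comm]

/-- For odd exponents the substitution `x = sin θ` applies; it reverses the orientation. -/
theorem J_sin (σ : ℝ → ℝ) {p q l : ℕ} (hpq : p + q + 1 = l) {h : ℝ} (hh : 0 < h) :
    J σ (2 * q + 1) (2 * p + 1) h = -1 * (h ^ l * √h *
      ∫ x in (-Real.sin (tau σ h))..Real.sin (tau σ h), x ^ (2 * (p + 1)) * (1 - x ^ 2) ^ q) := by
  rw [J, rpow_half hh (l := l) (by omega)]
  have := integral_sin_pow_mul_cos_pow_odd (a := tau σ h) (b := tau σ h + Real.pi) (2 * (p + 1)) q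
  rw [Real.sin_add_pi] at this
  rw [intervalIntegral.integral_symm (Real.sin (tau σ h)), ← this, neg_one_mul, mul_neg, neg_neg]
  simp only [mul_comm (Real.cos _ ^ _)]
  rfl

/-- Structure of `J_{i,j}` for `i + j = 2l` even, `l ≥ 2` (Lemma 3.2(ii)). -/
theorem J_structure_even (σ : ℝ → ℝ)
    (hσ : ∀ h : ℝ, 0 < h → 0 < σ h ∧ (σ h) ^ 2 + (σ h) ^ 6 = h)
    (i j l : ℕ) (hl : 2 ≤ l) (hij : i + j = 2 * l) :
    ∃ (α β : ℝ) (φ : ℕ → Polynomial ℝ),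
      (∀ m ≤ 3 * l - 3, (φ m).natDegree ≤ l - 1 - (m + 2) / 3) ∧
      ∀ h : ℝ, 0 < h →
        J σ i j h =
          α * h ^ l * J σ 0 0 h + β * h ^ (l - 1) * J σ 1 1 h +
            ∑ m ∈ Finset.range (3 * l - 2), (φ m).eval h * (σ h) ^ (7 + 2 * m) := by
  have hc : ∀ h, 0 < h → √h * Real.cos (tau σ h) = σ h := fun h hh =>
    sqrt_mul_cos_tau (hσ h hh).1 (hσ h hh).2
  have hs : ∀ h, 0 < h → √h * Real.sin (tau σ h) = σ h ^ 3 := fun h hh =>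
    sqrt_mul_sin_tau (hσ h hh).1 (hσ h hh).2
  have J00 : ∀ h, 0 < h → J σ 0 0 h = 2 * σ h := fun h hh => by
    have := J_cos σ (p := 0) (q := 0) rfl hh
    simp only [pow_zero, mul_one, integral_symm_even_pow] at this
    rw [this, ← hc h hh]
    simp
    ring
  have J11 : ∀ h, 0 < h → J σ 1 1 h = -(2 / 3) * σ h ^ 9 := fun h hh => by
    have := J_sin σ (p := 0) (q := 0) rfl hh
    simp only [pow_zero, mul_one, integral_symm_even_pow] at this
    rw [this, show σ h ^ 9 = (σ h ^ 3) ^ 3 by ring, ← hs h hh, mul_pow, pow_succ √h 2,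
      Real.sq_sqrt hh.le]
    norm_num
    ring
  have key : Good σ l (J σ i j) := by
    rcases Nat.even_or_odd' i with ⟨p, rfl | rfl⟩
    · obtain ⟨q, rfl⟩ : ∃ q, j = 2 * q := ⟨l - p, by omega⟩
      exact (good_integral hc q p (by omega) fun r _ hr => good_cos_term hσ hl hr).congr
        fun h hh => J_cos σ (by omega) hh
    · obtain ⟨q, rfl⟩ : ∃ q, j = 2 * q + 1 := ⟨l - p - 1, by omega⟩
      exact ((good_integral hs p (q + 1) (by omega) fun r hr1 hr =>
        good_sin_term hσ hl (by omega) hr).smul (-1)).congr fun h hh => J_sin σ (by omega) hh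
  obtain ⟨α, β, φ, hd, he⟩ := key
  refine ⟨α / 2, -(3 / 2) * β, φ, hd, fun h hh => ?_⟩
  rw [he h hh, J00 h hh, J11 h hh]
  ring
end

section
/- Let n ≥ 1 and let p⁺, q⁺, p⁻, q⁻ be real bivariate polynomials of total degree at most n. Then there exists a real polynomial P of one variable with P(0) = 0 and deg P ≤ 6⌊n/2⌋ + 6 such that M(u² + u⁶) = P(u) for all u > 0. -/
/-!
Writing `h = u² + u⁶`, uniqueness of the positive root gives `σ h = u`, and the point with polar
coordinates `(√h, τ h)` is `(u, u³)`. By linearity `M` is a combination of the terms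
`√h ^ m * ∫ cos ^ a * sin ^ b` with `a + b = m`, `1 ≤ m ≤ n + 1`, over half-circles that start or
end at `τ h`.

If `m` is even the integrand is `π`-periodic, so its integral over a half-circle does not depend
on `u`, and the term is a multiple of `(u² + u⁶) ^ (m / 2)`, of degree `3 m`
(`exists_poly_halfCircle`).

If `m` is odd, `cos ^ a * sin ^ b` has an antiderivative `f` that is a form of degree `m` in
`(cos, sin)` (`hasFormAntideriv_of_odd`). Thus `f` changes sign under `θ ↦ θ ± π`, the integral
over a half-circle is `∓ 2 f (τ h)`, and `√h ^ m * f (τ h)` is the value of the form at `(u, u³)`,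
a polynomial of degree at most `3 m`.

In both cases `m ≤ n + 1` and the parity of `m` give `3 m ≤ 6 ⌊n/2⌋ + 6`.
-/

open MeasureTheory intervalIntegral

/-- The first-order Melnikov function of the piecewise perturbed linear center with
switching curve `y = x³`, for perturbation polynomials `p⁺, q⁺, p⁻, q⁻`:
`M(h) = √h ∫_{τ(h)}^{τ(h)+π} (q⁺ sin θ + p⁺ cos θ) dθ
      + √h ∫_{τ(h)-π}^{τ(h)} (q⁻ sin θ + p⁻ cos θ) dθ`,
the polynomials being evaluated at `(√h cos θ, √h sin θ)`. -/
noncomputable def Mel (σ : ℝ → ℝ) (pp qp pm qm : MvPolynomial (Fin 2) ℝ) (h : ℝ) : ℝ :=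
  Real.sqrt h *
      (∫ θ in tau σ h..(tau σ h + Real.pi),
        MvPolynomial.eval ![Real.sqrt h * Real.cos θ, Real.sqrt h * Real.sin θ] qp *
            Real.sin θ +
          MvPolynomial.eval ![Real.sqrt h * Real.cos θ, Real.sqrt h * Real.sin θ] pp *
            Real.cos θ) +
    Real.sqrt h *
      (∫ θ in (tau σ h - Real.pi)..tau σ h,
        MvPolynomial.eval ![Real.sqrt h * Real.cos θ, Real.sqrt h * Real.sin θ] qm *
            Real.sin θ +
          MvPolynomial.eval ![Real.sqrt h * Real.cos θ, Real.sqrt h * Real.sin θ] pm *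
            Real.cos θ)

/-! ### Antiderivatives of odd trigonometric monomials -/

/-- `cosᵃ sinᵇ` has an antiderivative that is a form of degree `a + b` in `(cos, sin)`. Of such
an `f` only two consequences are recorded: it is `π`-antiperiodic (which holds when `a + b` is
odd), and it becomes a polynomial `F` in `u`, with `F 0 = 0` and of degree at most `3 (a + b)`, once
it is multiplied by `r ^ (a + b)` and evaluated at the point `(u, u³)` with polar coordinates
`(r, θ)`. -/
def HasFormAntideriv (a b : ℕ) : Prop :=
  ∃ (f : ℝ → ℝ) (F : Polynomial ℝ),
    (∀ θ, HasDerivAt f (Real.cos θ ^ a * Real.sin θ ^ b) θ) ∧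
    (∀ θ, f (θ + Real.pi) = -f θ) ∧
    F.eval 0 = 0 ∧ F.natDegree ≤ 3 * (a + b) ∧
    ∀ r u θ : ℝ, r * Real.cos θ = u → r * Real.sin θ = u ^ 3 → r ^ (a + b) * f θ = F.eval u

/-- For `b` odd, induction on `b` through
`d(cosᵃ⁺¹ sinᵇ⁺¹) = -(a + 1) cosᵃ sinᵇ⁺² + (b + 1) cosᵃ⁺² sinᵇ`. -/
lemma hasFormAntideriv_even_odd (k : ℕ) : ∀ a : ℕ, Even a → HasFormAntideriv a (2 * k + 1) := by
  induction k with
  | zero =>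
    intro a ha
    have hne : ((a : ℝ) + 1) ≠ 0 := by positivity
    refine ⟨fun θ => -(1 / ((a : ℝ) + 1)) * Real.cos θ ^ (a + 1),
      Polynomial.C (-(1 / ((a : ℝ) + 1))) * Polynomial.X ^ (a + 1), ?_, ?_, by simp, ?_, ?_⟩
    · intro θ
      refine (((Real.hasDerivAt_cos θ).pow (a + 1)).const_mul _).congr_deriv ?_
      push_cast
      field_simp
    · intro θ
      simp only [Real.cos_add_pi]
      rw [Odd.neg_pow ha.add_one]; ring
    · refine (Polynomial.natDegree_C_mul_X_pow_le _ _).trans (by omega)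
    · intro r u θ h1 h2
      simp only [Polynomial.eval_mul, Polynomial.eval_C, Polynomial.eval_pow, Polynomial.eval_X,
        ← h1]
      ring
  | succ k ih =>
    intro a ha
    obtain ⟨f, F, hd, hp, h0, hdeg, hev⟩ := ih (a + 2) (ha.add even_two)
    have hne : ((a : ℝ) + 1) ≠ 0 := by positivity
    refine ⟨fun θ => (1 / ((a : ℝ) + 1)) *
        ((2 * k + 2 : ℝ) * f θ - Real.cos θ ^ (a + 1) * Real.sin θ ^ (2 * k + 2)),
      Polynomial.C (1 / ((a : ℝ) + 1)) * (Polynomial.C (2 * k + 2 : ℝ) * F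
        - Polynomial.X ^ (a + 1 + 3 * (2 * k + 2))), ?_, ?_, by simp [h0], ?_, ?_⟩
    · intro θ
      refine ((((hd θ).const_mul _).sub (((Real.hasDerivAt_cos θ).pow (a + 1)).mul
        ((Real.hasDerivAt_sin θ).pow (2 * k + 2)))).const_mul _).congr_deriv ?_
      simp only [Pi.pow_apply]
      rw [show a + 1 - 1 = a by omega, show 2 * k + 2 - 1 = 2 * k + 1 by omega]
      push_cast
      field_simp
      ring
    · intro θ
      simp only [Real.cos_add_pi, Real.sin_add_pi, hp]
      rw [Odd.neg_pow ha.add_one, Even.neg_pow (by exact ⟨k + 1, by ring⟩)]; ring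
    · refine (Polynomial.natDegree_C_mul_le _ _).trans ?_
      refine (Polynomial.natDegree_sub_le _ _).trans (max_le ?_ ?_)
      · exact (Polynomial.natDegree_C_mul_le _ _).trans (by omega)
      · simp only [Polynomial.natDegree_X_pow]; omega
    · intro r u θ h1 h2
      have := hev r u θ h1 h2
      simp only [Polynomial.eval_mul, Polynomial.eval_C, Polynomial.eval_pow, Polynomial.eval_X,
        Polynomial.eval_sub, ← this]
      rw [pow_add u, pow_mul u, ← h2, ← h1]
      ring

/-- For `a` odd, induction on `a` through
`d(cosᵃ⁺¹ sinᵇ⁺¹) = (b + 1) cosᵃ⁺² sinᵇ - (a + 1) cosᵃ sinᵇ⁺²`. -/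
lemma hasFormAntideriv_odd_even (k : ℕ) : ∀ b : ℕ, Even b → HasFormAntideriv (2 * k + 1) b := by
  induction k with
  | zero =>
    intro b hb
    have hne : ((b : ℝ) + 1) ≠ 0 := by positivity
    refine ⟨fun θ => (1 / ((b : ℝ) + 1)) * Real.sin θ ^ (b + 1),
      Polynomial.C (1 / ((b : ℝ) + 1)) * Polynomial.X ^ (3 * (b + 1)), ?_, ?_, by simp, ?_, ?_⟩
    · intro θ
      refine (((Real.hasDerivAt_sin θ).pow (b + 1)).const_mul _).congr_deriv ?_
      push_cast
      field_simp
    · intro θ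
      simp only [Real.sin_add_pi]
      rw [Odd.neg_pow hb.add_one]; ring
    · refine (Polynomial.natDegree_C_mul_X_pow_le _ _).trans (by omega)
    · intro r u θ h1 h2
      simp only [Polynomial.eval_mul, Polynomial.eval_C, Polynomial.eval_pow, Polynomial.eval_X]
      rw [pow_mul u, ← h2]
      ring
  | succ k ih =>
    intro b hb
    obtain ⟨f, F, hd, hp, h0, hdeg, hev⟩ := ih (b + 2) (hb.add even_two)
    have hne : ((b : ℝ) + 1) ≠ 0 := by positivity
    refine ⟨fun θ => (1 / ((b : ℝ) + 1)) *
        ((2 * k + 2 : ℝ) * f θ + Real.cos θ ^ (2 * k + 2) * Real.sin θ ^ (b + 1)),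
      Polynomial.C (1 / ((b : ℝ) + 1)) * (Polynomial.C (2 * k + 2 : ℝ) * F
        + Polynomial.X ^ (2 * k + 2 + 3 * (b + 1))), ?_, ?_, by simp [h0], ?_, ?_⟩
    · intro θ
      refine ((((hd θ).const_mul _).add (((Real.hasDerivAt_cos θ).pow (2 * k + 2)).mul
        ((Real.hasDerivAt_sin θ).pow (b + 1)))).const_mul _).congr_deriv ?_
      simp only [Pi.pow_apply]
      rw [show b + 1 - 1 = b by omega, show 2 * k + 2 - 1 = 2 * k + 1 by omega]
      push_cast
      field_simp
      ring
    · intro θ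
      simp only [Real.cos_add_pi, Real.sin_add_pi, hp]
      rw [Odd.neg_pow hb.add_one, Even.neg_pow (by exact ⟨k + 1, by ring⟩)]; ring
    · refine (Polynomial.natDegree_C_mul_le _ _).trans ?_
      refine (Polynomial.natDegree_add_le _ _).trans (max_le ?_ ?_)
      · exact (Polynomial.natDegree_C_mul_le _ _).trans (by omega)
      · simp only [Polynomial.natDegree_X_pow]; omega
    · intro r u θ h1 h2
      have := hev r u θ h1 h2
      simp only [Polynomial.eval_mul, Polynomial.eval_C, Polynomial.eval_pow, Polynomial.eval_X,
        Polynomial.eval_add, ← this]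
      rw [pow_add u, pow_mul u 3, ← h2, ← h1]
      ring

lemma hasFormAntideriv_of_odd {a b : ℕ} (h : Odd (a + b)) : HasFormAntideriv a b := by
  rcases Nat.even_or_odd a with ha | ha
  · obtain ⟨k, rfl⟩ := (Nat.odd_add'.1 h).2 ha
    exact hasFormAntideriv_even_odd k a ha
  · obtain ⟨k, rfl⟩ := ha
    exact hasFormAntideriv_odd_even k b ((Nat.odd_add.1 h).1 ⟨k, rfl⟩)

/-! ### The change of variable `h = u² + u⁶` -/

lemma sqrt_mul_cos_arctan {u : ℝ} (hu : 0 < u) :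
    Real.sqrt (u ^ 2 + u ^ 6) * Real.cos (Real.arctan (u ^ 2)) = u := by
  have h : (0 : ℝ) < 1 + (u ^ 2) ^ 2 := by positivity
  rw [show u ^ 2 + u ^ 6 = u ^ 2 * (1 + (u ^ 2) ^ 2) by ring, Real.sqrt_mul (by positivity),
    Real.sqrt_sq hu.le, Real.cos_arctan]
  have := Real.sqrt_pos.2 h
  field_simp

lemma sqrt_mul_sin_arctan {u : ℝ} (hu : 0 < u) :
    Real.sqrt (u ^ 2 + u ^ 6) * Real.sin (Real.arctan (u ^ 2)) = u ^ 3 := by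
  have h : (0 : ℝ) < 1 + (u ^ 2) ^ 2 := by positivity
  rw [show u ^ 2 + u ^ 6 = u ^ 2 * (1 + (u ^ 2) ^ 2) by ring, Real.sqrt_mul (by positivity),
    Real.sqrt_sq hu.le, Real.sin_arctan]
  have := Real.sqrt_pos.2 h
  field_simp

lemma eq_of_sq_add_pow_six {x u : ℝ} (hx : 0 < x) (hu : 0 < u)
    (h : x ^ 2 + x ^ 6 = u ^ 2 + u ^ 6) : x = u := by
  rcases lt_trichotomy x u with hlt | heq | hlt
  · have : x ^ 2 + x ^ 6 < u ^ 2 + u ^ 6 := by gcongr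
    exact absurd h this.ne
  · exact heq
  · have : u ^ 2 + u ^ 6 < x ^ 2 + x ^ 6 := by gcongr
    exact absurd h this.ne'

/-! ### Polynomiality of the half-circle integrals -/

/-- The functions of `u` that agree on `u > 0` with a polynomial vanishing at `0` and of degree
at most `6⌊n/2⌋ + 6`. -/
def IsGood (n : ℕ) (Φ : ℝ → ℝ) : Prop :=
  ∃ P : Polynomial ℝ, P.eval 0 = 0 ∧ P.natDegree ≤ 6 * (n / 2) + 6 ∧
    ∀ u : ℝ, 0 < u → Φ u = P.eval u

lemma IsGood.add {n : ℕ} {Φ Ψ : ℝ → ℝ} (h₁ : IsGood n Φ) (h₂ : IsGood n Ψ) :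
    IsGood n (fun u => Φ u + Ψ u) := by
  obtain ⟨P, a, b, c⟩ := h₁
  obtain ⟨Q, a', b', c'⟩ := h₂
  exact ⟨P + Q, by simp [a, a'], (Polynomial.natDegree_add_le _ _).trans (max_le b b'),
    fun u hu => by simp [c u hu, c' u hu]⟩

lemma IsGood.const_mul {n : ℕ} {Φ : ℝ → ℝ} (c : ℝ) (h : IsGood n Φ) :
    IsGood n (fun u => c * Φ u) := by
  obtain ⟨P, a, b, d⟩ := h
  exact ⟨Polynomial.C c * P, by simp [a], (Polynomial.natDegree_C_mul_le _ _).trans b,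
    fun u hu => by simp [d u hu]⟩

lemma IsGood.sum {n : ℕ} {ι : Type*} (s : Finset ι) {Φ : ι → ℝ → ℝ}
    (h : ∀ i ∈ s, IsGood n (Φ i)) : IsGood n (fun u => ∑ i ∈ s, Φ i u) := by
  classical
  induction s using Finset.induction_on with
  | empty => exact ⟨0, by simp, by simp, by simp⟩
  | insert i s hi ih =>
    simp only [Finset.sum_insert hi]
    exact (h i (Finset.mem_insert_self _ _)).add
      (ih fun j hj => h j (Finset.mem_insert_of_mem hj))

/-- The monomial terms of `M`. Taking `T = π` gives the half-circle on the side `y ≥ x³`, and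
`T = -π` the other one, traversed backwards. -/
lemma exists_poly_halfCircle {n a b : ℕ} (h1 : 1 ≤ a + b) (hn : a + b ≤ n + 1) {T : ℝ}
    (hT : T = Real.pi ∨ T = -Real.pi) :
    IsGood n (fun u => Real.sqrt (u ^ 2 + u ^ 6) ^ (a + b) *
      ∫ θ in Real.arctan (u ^ 2)..(Real.arctan (u ^ 2) + T),
        Real.cos θ ^ a * Real.sin θ ^ b) := by
  rcases Nat.even_or_odd (a + b) with he | ho
  · have hper : Function.Periodic (fun θ => Real.cos θ ^ a * Real.sin θ ^ b) Real.pi := by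
      intro θ
      simp only [Real.cos_add_pi, Real.sin_add_pi]
      rw [neg_pow, neg_pow (Real.sin θ)]
      have : (-1 : ℝ) ^ a * (-1) ^ b = 1 := by rw [← pow_add, he.neg_one_pow]
      linear_combination Real.cos θ ^ a * Real.sin θ ^ b * this
    have hperT : Function.Periodic (fun θ => Real.cos θ ^ a * Real.sin θ ^ b) T := by
      rcases hT with rfl | rfl
      · exact hper
      · exact hper.neg
    obtain ⟨k, hk⟩ := he
    refine ⟨(Polynomial.X ^ 2 + Polynomial.X ^ 6) ^ k *
      Polynomial.C (∫ θ in (0 : ℝ)..(0 + T), Real.cos θ ^ a * Real.sin θ ^ b), ?_, ?_, ?_⟩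
    · have : k ≠ 0 := by omega
      simp [this]
    · refine (Polynomial.natDegree_mul_C_le _ _).trans ?_
      refine (Polynomial.natDegree_pow_le).trans ?_
      have : (Polynomial.X ^ 2 + Polynomial.X ^ 6 : Polynomial ℝ).natDegree ≤ 6 := by
        compute_degree
      refine (Nat.mul_le_mul_left k this).trans (by omega)
    · intro u hu
      beta_reduce
      rw [hperT.intervalIntegral_add_eq (Real.arctan (u ^ 2)) 0, hk, ← two_mul, pow_mul,
        Real.sq_sqrt (by positivity)]
      simp
  · obtain ⟨f, F, hd, hp, h0, hdeg, hev⟩ := hasFormAntideriv_of_odd ho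
    have hanti : ∀ t, f (t + T) = -f t := by
      intro t
      rcases hT with rfl | rfl
      · exact hp t
      · have := hp (t + -Real.pi)
        rw [neg_add_cancel_right] at this
        linarith
    refine ⟨Polynomial.C (-2) * F, by simp [h0], ?_, ?_⟩
    · refine (Polynomial.natDegree_C_mul_le _ _).trans ?_
      obtain ⟨k, hk⟩ := ho
      omega
    · intro u hu
      beta_reduce
      rw [intervalIntegral.integral_eq_sub_of_hasDerivAt (fun θ _ => hd θ)
        (Continuous.intervalIntegrable (by fun_prop) _ _), hanti, Polynomial.eval_mul,
        Polynomial.eval_C, ← hev _ u _ (sqrt_mul_cos_arctan hu) (sqrt_mul_sin_arctan hu)]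
      ring

lemma continuous_eval_circle (p : MvPolynomial (Fin 2) ℝ) (r : ℝ) :
    Continuous fun θ : ℝ => MvPolynomial.eval ![r * Real.cos θ, r * Real.sin θ] p := by
  simp only [MvPolynomial.eval_eq', Fin.prod_univ_two]
  simp only [Matrix.cons_val_zero, Matrix.cons_val_one]
  fun_prop

/-- One of the four terms `√h ∫ p cos`, `√h ∫ q sin` of `M`, according to the choice of
`(a, b)`. -/
lemma isGood_term {n a b : ℕ} (hab : a + b = 1) {p : MvPolynomial (Fin 2) ℝ}
    (hp : p.totalDegree ≤ n) {T : ℝ} (hT : T = Real.pi ∨ T = -Real.pi) :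
    IsGood n (fun u => Real.sqrt (u ^ 2 + u ^ 6) *
      ∫ θ in Real.arctan (u ^ 2)..(Real.arctan (u ^ 2) + T),
        MvPolynomial.eval ![Real.sqrt (u ^ 2 + u ^ 6) * Real.cos θ,
          Real.sqrt (u ^ 2 + u ^ 6) * Real.sin θ] p * (Real.cos θ ^ a * Real.sin θ ^ b)) := by
  have key : ∀ u : ℝ, (Real.sqrt (u ^ 2 + u ^ 6) *
      ∫ θ in Real.arctan (u ^ 2)..(Real.arctan (u ^ 2) + T),
        MvPolynomial.eval ![Real.sqrt (u ^ 2 + u ^ 6) * Real.cos θ,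
          Real.sqrt (u ^ 2 + u ^ 6) * Real.sin θ] p * (Real.cos θ ^ a * Real.sin θ ^ b)) =
      ∑ d ∈ p.support, p.coeff d * (Real.sqrt (u ^ 2 + u ^ 6) ^ ((d 0 + a) + (d 1 + b)) *
        ∫ θ in Real.arctan (u ^ 2)..(Real.arctan (u ^ 2) + T),
          Real.cos θ ^ (d 0 + a) * Real.sin θ ^ (d 1 + b)) := by
    intro u
    generalize Real.sqrt (u ^ 2 + u ^ 6) = r
    have hint : ∀ θ : ℝ, MvPolynomial.eval ![r * Real.cos θ, r * Real.sin θ] p *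
        (Real.cos θ ^ a * Real.sin θ ^ b) = ∑ d ∈ p.support, p.coeff d * r ^ (d 0 + d 1) *
          (Real.cos θ ^ (d 0 + a) * Real.sin θ ^ (d 1 + b)) := by
      intro θ
      simp only [MvPolynomial.eval_eq', Fin.prod_univ_two, Finset.sum_mul]
      simp only [Matrix.cons_val_zero, Matrix.cons_val_one]
      exact Finset.sum_congr rfl fun d _ => by ring
    simp only [hint]
    rw [intervalIntegral.integral_finsetSum
      (fun d _ => Continuous.intervalIntegrable (by fun_prop) _ _), Finset.mul_sum]
    refine Finset.sum_congr rfl fun d _ => ?_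
    rw [intervalIntegral.integral_const_mul,
      show d 0 + a + (d 1 + b) = d 0 + d 1 + 1 by omega]
    ring
  simp only [key]
  refine IsGood.sum _ fun d hd => (exists_poly_halfCircle (by omega) ?_ hT).const_mul _
  have hdeg := (MvPolynomial.le_totalDegree hd).trans hp
  rw [Finsupp.sum_fintype _ _ (fun _ => rfl), Fin.sum_univ_two] at hdeg
  omega

lemma isGood_half {n : ℕ} {p q : MvPolynomial (Fin 2) ℝ} (hp : p.totalDegree ≤ n)
    (hq : q.totalDegree ≤ n) {T : ℝ} (hT : T = Real.pi ∨ T = -Real.pi) :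
    IsGood n (fun u => Real.sqrt (u ^ 2 + u ^ 6) *
      ∫ θ in Real.arctan (u ^ 2)..(Real.arctan (u ^ 2) + T),
        (MvPolynomial.eval ![Real.sqrt (u ^ 2 + u ^ 6) * Real.cos θ,
          Real.sqrt (u ^ 2 + u ^ 6) * Real.sin θ] q * Real.sin θ +
        MvPolynomial.eval ![Real.sqrt (u ^ 2 + u ^ 6) * Real.cos θ,
          Real.sqrt (u ^ 2 + u ^ 6) * Real.sin θ] p * Real.cos θ)) := by
  have h := (isGood_term (a := 0) (b := 1) rfl hq hT).add (isGood_term (a := 1) (b := 0) rfl hp hT)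
  convert h using 2 with u
  have hc := continuous_eval_circle q (Real.sqrt (u ^ 2 + u ^ 6))
  have hc' := continuous_eval_circle p (Real.sqrt (u ^ 2 + u ^ 6))
  simp only [pow_zero, pow_one, one_mul, mul_one]
  rw [intervalIntegral.integral_add
    (Continuous.intervalIntegrable (by fun_prop) _ _)
    (Continuous.intervalIntegrable (by fun_prop) _ _)]
  ring

/-- After the change of variable `h = u² + u⁶`, the first-order Melnikov function
becomes a polynomial in `u` of degree at most `6⌊n/2⌋ + 6` vanishing at `0`. -/
theorem Mel_polynomial_in_u (n : ℕ) (hn : 1 ≤ n) (σ : ℝ → ℝ)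
    (hσ : ∀ h : ℝ, 0 < h → 0 < σ h ∧ (σ h) ^ 2 + (σ h) ^ 6 = h)
    (pp qp pm qm : MvPolynomial (Fin 2) ℝ)
    (hpp : pp.totalDegree ≤ n) (hqp : qp.totalDegree ≤ n)
    (hpm : pm.totalDegree ≤ n) (hqm : qm.totalDegree ≤ n) :
    ∃ P : Polynomial ℝ,
      P.eval 0 = 0 ∧ P.natDegree ≤ 6 * (n / 2) + 6 ∧
      ∀ u : ℝ, 0 < u → Mel σ pp qp pm qm (u ^ 2 + u ^ 6) = P.eval u := by
  obtain ⟨P, h0, hdeg, hP⟩ := (isGood_half hpp hqp (Or.inl rfl)).add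
    ((isGood_half hpm hqm (Or.inr rfl)).const_mul (-1))
  refine ⟨P, h0, hdeg, fun u hu => ?_⟩
  have hpos : 0 < u ^ 2 + u ^ 6 := by positivity
  have hτ : tau σ (u ^ 2 + u ^ 6) = Real.arctan (u ^ 2) := by
    obtain ⟨h1, h2⟩ := hσ _ hpos
    rw [tau, eq_of_sq_add_pow_six h1 hu h2]
  rw [← hP u hu, Mel, hτ, sub_eq_add_neg,
    intervalIntegral.integral_symm (Real.arctan (u ^ 2)) (Real.arctan (u ^ 2) + -Real.pi)]
  ring
end

section
/- Let p⁺, q⁺, p⁻, q⁻ be real bivariate polynomials of total degree at most 1. If the first-order Melnikov function M is not identically zero on (0,∞), then M has at most 3 zeros in (0,∞), counted with multiplicity (order of vanishing). -/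
/-!
Write `φ(u) = u² + u⁶`, so that `σ` is the inverse of `φ` on `(0,∞)`. Over a half period the
integrals of `sin²` and `cos²` equal `π/2` and that of `sin · cos` vanishes, while those of `sin`
and `cos` are multiples of the coordinates `(cos τ, sin τ)` of the switching point, which on the
circle `x² + y² = φ(u)` is `(u, u³)`. Hence `M(φ(u)) = A u + B u³ + K (u² + u⁶)` for constants
`A, B, K` (`Mel_phi`).

Since `φ' > 0` on `(0,∞)`, the inverse function theorem shows that `M` is analytic and that its
order of vanishing at `φ(u)` is at most the multiplicity of `u` as a root of this polynomial
(`le_rootMultiplicity_of_comp_phi`). The polynomial has at most four nonzero coefficients, hence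
at most three sign variations, and Descartes' rule of signs bounds the number of its positive
roots, counted with multiplicity, by three.
-/

open MeasureTheory intervalIntegral

/-! ### The Melnikov function in the coordinate `u = σ(h)` -/

/-- The squared radius `h = u² + u⁶` of the circle through the point `(u, u³)`. -/
noncomputable def phi (u : ℝ) : ℝ := u ^ 2 + u ^ 6

lemma phi_pos {u : ℝ} (hu : 0 < u) : 0 < phi u := by
  unfold phi; positivity

lemma phi_strictMonoOn : StrictMonoOn phi (Set.Ioi 0) := by
  intro a ha b _ hab
  have ha' : (0 : ℝ) < a := ha
  unfold phi
  gcongr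

lemma sigma_phi {σ : ℝ → ℝ} (hσ : ∀ h : ℝ, 0 < h → 0 < σ h ∧ (σ h) ^ 2 + (σ h) ^ 6 = h)
    {u : ℝ} (hu : 0 < u) : σ (phi u) = u :=
  phi_strictMonoOn.injOn (hσ _ (phi_pos hu)).1 hu (hσ _ (phi_pos hu)).2

lemma exists_affine_eval (p : MvPolynomial (Fin 2) ℝ) (hp : p.totalDegree ≤ 1) :
    ∃ a b c : ℝ, ∀ x y : ℝ, MvPolynomial.eval ![x, y] p = a + b * x + c * y := by
  classical
  refine ⟨p.coeff 0, p.coeff (Finsupp.single 0 1), p.coeff (Finsupp.single 1 1), fun x y => ?_⟩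
  have hsub : p.support ⊆ {0, Finsupp.single 0 1, Finsupp.single 1 1} := by
    intro d hd
    have h1 := (MvPolynomial.le_totalDegree hd).trans hp
    rw [Finsupp.sum_fintype _ _ (fun _ => rfl), Fin.sum_univ_two] at h1
    have h2 : (d 0 = 0 ∧ d 1 = 0) ∨ (d 0 = 1 ∧ d 1 = 0) ∨ (d 0 = 0 ∧ d 1 = 1) := by omega
    simp only [Finset.mem_insert, Finset.mem_singleton]
    rcases h2 with ⟨h0, h1⟩ | ⟨h0, h1⟩ | ⟨h0, h1⟩
    · left; ext i; fin_cases i <;> simp [h0, h1]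
    · right; left; ext i; fin_cases i <;> simp [h0, h1]
    · right; right; ext i; fin_cases i <;> simp [h0, h1]
  have e1 : (0 : Fin 2 →₀ ℕ) ≠ Finsupp.single 0 1 := fun h => by
    simpa using DFunLike.congr_fun h 0
  have e2 : (0 : Fin 2 →₀ ℕ) ≠ Finsupp.single 1 1 := fun h => by
    simpa using DFunLike.congr_fun h 1
  have e3 : (Finsupp.single 0 1 : Fin 2 →₀ ℕ) ≠ Finsupp.single 1 1 := fun h => by
    simpa using DFunLike.congr_fun h 0
  rw [MvPolynomial.eval_eq', Finset.sum_subset hsub (fun d _ hd => by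
    rw [MvPolynomial.notMem_support_iff.mp hd, zero_mul]),
    Finset.sum_insert (by simp [e1, e2]), Finset.sum_insert (by simp [e3]), Finset.sum_singleton]
  simp [Fin.prod_univ_two]
  ring

lemma integral_half_period (a b c a' b' c' r s : ℝ) :
    ∫ θ in s..(s + Real.pi),
      ((a + b * (r * Real.cos θ) + c * (r * Real.sin θ)) * Real.sin θ +
        (a' + b' * (r * Real.cos θ) + c' * (r * Real.sin θ)) * Real.cos θ) =
      2 * a * Real.cos s - 2 * a' * Real.sin s + r * (c + b') * (Real.pi / 2) := by
  have key : ∀ θ : ℝ, HasDerivAt (fun θ : ℝ => -a * Real.cos θ + a' * Real.sin θ +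
      r * ((b + c') / 2 * Real.sin θ ^ 2 + c / 2 * (θ - Real.sin θ * Real.cos θ) +
        b' / 2 * (θ + Real.sin θ * Real.cos θ)))
      ((a + b * (r * Real.cos θ) + c * (r * Real.sin θ)) * Real.sin θ +
        (a' + b' * (r * Real.cos θ) + c' * (r * Real.sin θ)) * Real.cos θ) θ := by
    intro θ
    have hs := Real.hasDerivAt_sin θ
    have hc := Real.hasDerivAt_cos θ
    have hi := hasDerivAt_id θ
    have := ((hc.const_mul (-a)).add (hs.const_mul a')).add
      (((((hs.pow 2).const_mul ((b + c') / 2)).add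
        ((hi.sub (hs.mul hc)).const_mul (c / 2))).add
        ((hi.add (hs.mul hc)).const_mul (b' / 2))).const_mul r)
    refine this.congr_deriv ?_
    have h1 := Real.sin_sq_add_cos_sq θ
    push_cast
    linear_combination (-(r * c / 2) - r * b' / 2) * h1
  rw [intervalIntegral.integral_eq_sub_of_hasDerivAt (fun θ _ => key θ)
    (Continuous.intervalIntegrable (by fun_prop) _ _)]
  simp only [Real.sin_add_pi, Real.cos_add_pi]
  ring

/-- The switching point on the circle of squared radius `φ(u)` has coordinates `(u, u³)`. -/
lemma sqrt_phi_mul_cos_sin {u : ℝ} (hu : 0 < u) :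
    √(phi u) * Real.cos (Real.arctan (u ^ 2)) = u ∧
      √(phi u) * Real.sin (Real.arctan (u ^ 2)) = u ^ 3 := by
  have h1 : √(phi u) = u * √(1 + (u ^ 2) ^ 2) := by
    rw [show phi u = u ^ 2 * (1 + (u ^ 2) ^ 2) by unfold phi; ring,
      Real.sqrt_mul (sq_nonneg u), Real.sqrt_sq hu.le]
  have h2 : √(1 + (u ^ 2) ^ 2) ≠ 0 := (Real.sqrt_pos.mpr (by positivity)).ne'
  rw [Real.cos_arctan, Real.sin_arctan, h1]
  constructor <;> field_simp

open Polynomial in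
lemma Mel_phi {σ : ℝ → ℝ} (hσ : ∀ h : ℝ, 0 < h → 0 < σ h ∧ (σ h) ^ 2 + (σ h) ^ 6 = h)
    {pp qp pm qm : MvPolynomial (Fin 2) ℝ}
    (hpp : pp.totalDegree ≤ 1) (hqp : qp.totalDegree ≤ 1)
    (hpm : pm.totalDegree ≤ 1) (hqm : qm.totalDegree ≤ 1) :
    ∃ A B K : ℝ, ∀ u : ℝ, 0 < u → Mel σ pp qp pm qm (phi u) =
      (C A * X + C B * X ^ 3 + C K * (X ^ 2 + X ^ 6)).eval u := by
  obtain ⟨a₁, b₁, c₁, h₁⟩ := exists_affine_eval pp hpp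
  obtain ⟨a₂, b₂, c₂, h₂⟩ := exists_affine_eval qp hqp
  obtain ⟨a₃, b₃, c₃, h₃⟩ := exists_affine_eval pm hpm
  obtain ⟨a₄, b₄, c₄, h₄⟩ := exists_affine_eval qm hqm
  refine ⟨2 * a₂ - 2 * a₄, -2 * a₁ + 2 * a₃,
    (c₂ + b₁ + c₄ + b₃) * (Real.pi / 2), fun u hu => ?_⟩
  obtain ⟨hc, hs⟩ := sqrt_phi_mul_cos_sin hu
  have hr : √(phi u) * √(phi u) = phi u := Real.mul_self_sqrt (phi_pos hu).le
  have hI := integral_half_period a₄ b₄ c₄ a₃ b₃ c₃ (√(phi u)) (Real.arctan (u ^ 2) - Real.pi)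
  rw [sub_add_cancel, Real.cos_sub_pi, Real.sin_sub_pi] at hI
  simp only [Mel, tau, sigma_phi hσ hu, h₁, h₂, h₃, h₄]
  rw [integral_half_period, hI]
  simp only [eval_add, eval_mul, eval_C, eval_X, eval_pow]
  rw [show u ^ 2 + u ^ 6 = phi u from rfl]
  linear_combination (2 * a₂ - 2 * a₄) * hc + (-2 * a₁ + 2 * a₃) * hs +
    (c₂ + b₁ + c₄ + b₃) * (Real.pi / 2) * hr

/-! ### Transfer of multiplicities along `φ` -/

lemma analyticOrderAt_eval (P : Polynomial ℝ) (hP : P ≠ 0) (u : ℝ) :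
    analyticOrderAt (fun x => P.eval x) u = P.rootMultiplicity u := by
  obtain ⟨Q, hQ, hnd⟩ := P.exists_eq_pow_rootMultiplicity_mul_and_not_dvd hP u
  refine (AnalyticAt.analyticOrderAt_eq_natCast (AnalyticOnNhd.eval_polynomial P u trivial)).mpr
    ⟨fun x => Q.eval x, AnalyticOnNhd.eval_polynomial Q u trivial, ?_, .of_forall fun x => ?_⟩
  · rwa [Polynomial.dvd_iff_isRoot] at hnd
  · conv_lhs => rw [hQ]
    simp

/-- `φ` is a local analytic diffeomorphism on `(0,∞)`, so `F` inherits analyticity and order of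
vanishing at `φ(u)` from `F ∘ φ` at `u`. -/
lemma le_rootMultiplicity_of_comp_phi {F : ℝ → ℝ} {P : Polynomial ℝ} (hP : P ≠ 0)
    (hF : ∀ u : ℝ, 0 < u → F (phi u) = P.eval u) {u : ℝ} (hu : 0 < u) {n : ℕ}
    (hn : ∀ k < n, iteratedDeriv k F (phi u) = 0) : n ≤ P.rootMultiplicity u := by
  have hphi : AnalyticAt ℝ phi u := by unfold phi; fun_prop
  have hderiv : HasDerivAt phi (2 * u + 6 * u ^ 5) u := by
    refine ((hasDerivAt_pow 2 u).add (hasDerivAt_pow 6 u)).congr_deriv ?_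
    norm_num
  have hphi' : deriv phi u ≠ 0 := by
    rw [hderiv.deriv]; positivity
  have hev : F ∘ phi =ᶠ[nhds u] fun x => P.eval x := by
    filter_upwards [Ioi_mem_nhds hu] with x hx using hF x hx
  have han : AnalyticAt ℝ F (phi u) := (analyticAt_comp_iff_of_deriv_ne_zero hphi hphi').mp
    ((AnalyticOnNhd.eval_polynomial P u trivial).congr hev.symm)
  have hle := (natCast_le_analyticOrderAt_iff_iteratedDeriv_eq_zero han).mpr hn
  rw [← analyticOrderAt_comp_of_deriv_ne_zero hphi hphi', analyticOrderAt_congr hev,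
    analyticOrderAt_eval P hP] at hle
  exact_mod_cast hle

/-! ### Counting positive roots -/

/-- Each coefficient after the leading one contributes at most one sign variation, by induction
on `eraseLead`. -/
lemma signVariations_lt_card_support (P : Polynomial ℝ) (hP : P ≠ 0) :
    P.signVariations < P.support.card := by
  induction h : P.support.card generalizing P with
  | zero => simp_all
  | succ n ih =>
    have hc := Polynomial.card_support_eraseLead' h
    by_cases h0 : P.eraseLead = 0
    · have := P.eraseLead_add_monomial_natDegree_leadingCoeff
      rw [h0, zero_add] at this
      rw [← this, Polynomial.signVariations_monomial]
      omega
    · have := ih _ h0 hc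
      have := P.signVariations_le_eraseLead_succ
      omega

lemma sum_rootMultiplicity_le_countP (P : Polynomial ℝ) (T : Finset ℝ) (hT : ∀ u ∈ T, 0 < u) :
    ∑ u ∈ T, P.rootMultiplicity u ≤ P.roots.countP (0 < ·) := by
  rw [Multiset.countP_eq_card_filter]
  calc ∑ u ∈ T, P.rootMultiplicity u = ∑ u ∈ T, (P.roots.filter (0 < ·)).count u := by
        refine Finset.sum_congr rfl fun u hu => ?_
        rw [Multiset.count_filter_of_pos (hT u hu), Polynomial.count_roots]
    _ ≤ (P.roots.filter (0 < ·)).card := by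
        classical
        rw [← Multiset.toFinset_sum_count_eq]
        exact Finset.sum_le_sum_of_ne_zero fun u _ hne => by
          rwa [Multiset.mem_toFinset, ← Multiset.count_ne_zero]

lemma countP_pos_roots_le_three (A B K : ℝ)
    (hP : Polynomial.C A * Polynomial.X + Polynomial.C B * Polynomial.X ^ 3 +
      Polynomial.C K * (Polynomial.X ^ 2 + Polynomial.X ^ 6) ≠ 0) :
    (Polynomial.C A * Polynomial.X + Polynomial.C B * Polynomial.X ^ 3 +
      Polynomial.C K * (Polynomial.X ^ 2 + Polynomial.X ^ 6)).roots.countP (0 < ·) ≤ 3 := by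
  have hsupp : (Polynomial.C A * Polynomial.X + Polynomial.C B * Polynomial.X ^ 3 +
      Polynomial.C K * (Polynomial.X ^ 2 + Polynomial.X ^ 6)).support ⊆ {1, 2, 3, 6} := by
    intro n hn
    by_contra hnot
    simp only [Finset.mem_insert, Finset.mem_singleton, not_or] at hnot
    obtain ⟨h1, h2, h3, h6⟩ := hnot
    apply Polynomial.mem_support_iff.mp hn
    simp [Polynomial.coeff_X, Polynomial.coeff_X_pow, Ne.symm h1, h2, h3, h6]
  have hcard := (Finset.card_le_card hsupp).trans Finset.card_le_four
  have hroots := Polynomial.roots_countP_pos_le_signVariations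
    (P := Polynomial.C A * Polynomial.X + Polynomial.C B * Polynomial.X ^ 3 +
      Polynomial.C K * (Polynomial.X ^ 2 + Polynomial.X ^ 6))
  have hsign := signVariations_lt_card_support _ hP
  omega

/-- The zero count for any function `F` on `(0,∞)` that becomes a polynomial with at most three
positive roots in the coordinate `u = σ(h)`. -/
lemma sum_mult_le_three {σ F : ℝ → ℝ} {P : Polynomial ℝ}
    (hσ : ∀ h : ℝ, 0 < h → 0 < σ h ∧ (σ h) ^ 2 + (σ h) ^ 6 = h)
    (hF : ∀ u : ℝ, 0 < u → F (phi u) = P.eval u)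
    (hroots : P ≠ 0 → P.roots.countP (0 < ·) ≤ 3)
    (hM : ∃ h : ℝ, 0 < h ∧ F h ≠ 0)
    (S : Finset ℝ) (hS : ∀ h₀ ∈ S, 0 < h₀) (m : ℝ → ℕ)
    (hmul : ∀ h₀ ∈ S, ∀ k < m h₀, iteratedDeriv k F h₀ = 0) :
    ∑ h₀ ∈ S, m h₀ ≤ 3 := by
  classical
  have hback : ∀ h : ℝ, 0 < h → phi (σ h) = h := fun h hh => (hσ h hh).2
  have hP : P ≠ 0 := by
    rintro h0
    obtain ⟨h, hh, hne⟩ := hM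
    apply hne
    rw [← hback h hh, hF _ (hσ h hh).1, h0, Polynomial.eval_zero]
  have hinj : Set.InjOn σ S := fun x hx y hy hxy => by
    rw [← hback x (hS x hx), ← hback y (hS y hy), hxy]
  have h1 : ∑ h₀ ∈ S, m h₀ ≤ ∑ h₀ ∈ S, P.rootMultiplicity (σ h₀) := by
    refine Finset.sum_le_sum fun h₀ hh => ?_
    refine le_rootMultiplicity_of_comp_phi (F := F) hP hF (hσ h₀ (hS h₀ hh)).1 fun k hk => ?_
    rw [hback h₀ (hS h₀ hh)]
    exact hmul h₀ hh k hk
  have h2 : ∑ u ∈ S.image σ, P.rootMultiplicity u ≤ P.roots.countP (0 < ·) := by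
    refine sum_rootMultiplicity_le_countP P _ fun u hu => ?_
    obtain ⟨h, hh, rfl⟩ := Finset.mem_image.mp hu
    exact (hσ h (hS h hh)).1
  rw [Finset.sum_image hinj] at h2
  exact h1.trans (h2.trans (hroots hP))

/-- For degree-1 perturbations, a not-identically-zero first-order Melnikov function
has at most 3 zeros on `(0,∞)` counted with multiplicity (order of vanishing). -/
theorem Mel_zero_count_deg_one (σ : ℝ → ℝ)
    (hσ : ∀ h : ℝ, 0 < h → 0 < σ h ∧ (σ h) ^ 2 + (σ h) ^ 6 = h)
    (pp qp pm qm : MvPolynomial (Fin 2) ℝ)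
    (hpp : pp.totalDegree ≤ 1) (hqp : qp.totalDegree ≤ 1)
    (hpm : pm.totalDegree ≤ 1) (hqm : qm.totalDegree ≤ 1)
    (hM : ∃ h : ℝ, 0 < h ∧ Mel σ pp qp pm qm h ≠ 0)
    (S : Finset ℝ) (hS : ∀ h₀ ∈ S, 0 < h₀) (m : ℝ → ℕ)
    (hmul : ∀ h₀ ∈ S, ∀ k < m h₀, iteratedDeriv k (Mel σ pp qp pm qm) h₀ = 0) :
    ∑ h₀ ∈ S, m h₀ ≤ 3 := by
  obtain ⟨A, B, K, hAB⟩ := Mel_phi hσ hpp hqp hpm hqm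
  exact sum_mult_le_three hσ hAB (countP_pos_roots_le_three A B K) hM S hS m hmul
end

section
/- Let p^±(x,y) = Σ_{0 ≤ i+j ≤ 1} a^±_{i,j} x^i y^j and q^±(x,y) = Σ_{0 ≤ i+j ≤ 1} b^±_{i,j} x^i y^j be real polynomials of degree at most 1. Then for all u > 0, M(u² + u⁶) = 2(b⁺_{0,0} − b⁻_{0,0}) u + (π/2)(b⁺_{0,1} + a⁺_{1,0} + b⁻_{0,1} + a⁻_{1,0})(u² + u⁶) + 2(a⁻_{0,0} − a⁺_{0,0}) u³. -/
/-!
With `r = √h`, each integrand is a trigonometric polynomial of degree two in `θ`. Over a half period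
`[t, t + π]` the `sin θ cos θ` terms vanish, `sin²` and `cos²` each contribute `π / 2`, and the
constant coefficients contribute multiples of `cos t` and `sin t` (`integral_half_period`). At
`t = τ(h)` these are the coordinates of the intersection point of the circle with `y = x³`:
for `h = u² + u⁶` one has `σ(h) = u`, so `r cos τ(h) = u` and `r sin τ(h) = u³`. The second
half period starts at `τ(h) - π`, where both coordinates change sign.
-/

open MeasureTheory intervalIntegral

/-- The first-order Melnikov function of the piecewise perturbed linear center with
switching curve `y = x³`, for perturbation functions `p⁺, q⁺, p⁻, q⁻`:
`M(h) = √h ∫_{τ(h)}^{τ(h)+π} (q⁺ sin θ + p⁺ cos θ) dθ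
      + √h ∫_{τ(h)-π}^{τ(h)} (q⁻ sin θ + p⁻ cos θ) dθ`,
the functions being evaluated at `(√h cos θ, √h sin θ)`. -/
noncomputable def MelF (σ : ℝ → ℝ) (pp qp pm qm : ℝ → ℝ → ℝ) (h : ℝ) : ℝ :=
  Real.sqrt h *
      (∫ θ in tau σ h..(tau σ h + Real.pi),
        qp (Real.sqrt h * Real.cos θ) (Real.sqrt h * Real.sin θ) * Real.sin θ +
          pp (Real.sqrt h * Real.cos θ) (Real.sqrt h * Real.sin θ) * Real.cos θ) +
    Real.sqrt h *
      (∫ θ in (tau σ h - Real.pi)..tau σ h,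
        qm (Real.sqrt h * Real.cos θ) (Real.sqrt h * Real.sin θ) * Real.sin θ +
          pm (Real.sqrt h * Real.cos θ) (Real.sqrt h * Real.sin θ) * Real.cos θ)

/-- The half-period integral, evaluated from an explicit antiderivative. -/
lemma integral_half_period_s17 (r a0 a1 a2 b0 b1 b2 t : ℝ) :
    (∫ θ in t..(t + Real.pi),
      (b0 + b1 * (r * Real.cos θ) + b2 * (r * Real.sin θ)) * Real.sin θ +
        (a0 + a1 * (r * Real.cos θ) + a2 * (r * Real.sin θ)) * Real.cos θ) =
      2 * b0 * Real.cos t - 2 * a0 * Real.sin t + r * (Real.pi / 2) * (b2 + a1) := by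
  have key : ∀ θ ∈ Set.uIcc t (t + Real.pi), HasDerivAt
      (fun θ => -b0 * Real.cos θ + a0 * Real.sin θ + r * ((b1 + a2) / 2) * Real.sin θ ^ 2 +
        r * b2 / 2 * (θ - Real.sin θ * Real.cos θ) + r * a1 / 2 * (θ + Real.sin θ * Real.cos θ))
      ((b0 + b1 * (r * Real.cos θ) + b2 * (r * Real.sin θ)) * Real.sin θ +
        (a0 + a1 * (r * Real.cos θ) + a2 * (r * Real.sin θ)) * Real.cos θ) θ := by
    intro θ _
    have hs := Real.hasDerivAt_sin θ
    have hc := Real.hasDerivAt_cos θ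
    have hi := hasDerivAt_id θ
    have hsc := hs.mul hc
    refine (((((hc.const_mul (-b0)).add (hs.const_mul a0)).add
      ((hs.pow 2).const_mul (r * ((b1 + a2) / 2)))).add
      ((hi.sub hsc).const_mul (r * b2 / 2))).add
      ((hi.add hsc).const_mul (r * a1 / 2))).congr_deriv ?_
    have h1 := Real.sin_sq_add_cos_sq θ
    push_cast
    linear_combination (-(r * b2 / 2) - r * a1 / 2) * h1
  rw [integral_eq_sub_of_hasDerivAt key (Continuous.intervalIntegrable (by fun_prop) _ _),
    Real.sin_add_pi, Real.cos_add_pi]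
  ring

/-- `u ↦ u² + u⁶` is injective on the positive reals, so `σ` inverts it. -/
lemma sigma_eq (σ : ℝ → ℝ)
    (hσ : ∀ h : ℝ, 0 < h → 0 < σ h ∧ (σ h) ^ 2 + (σ h) ^ 6 = h) (u : ℝ) (hu : 0 < u) :
    σ (u ^ 2 + u ^ 6) = u := by
  obtain ⟨hs, he⟩ := hσ (u ^ 2 + u ^ 6) (by positivity)
  rcases lt_trichotomy (σ (u ^ 2 + u ^ 6)) u with h | h | h
  · have h2 := pow_lt_pow_left₀ h hs.le (n := 2) (by norm_num)
    have h6 := pow_lt_pow_left₀ h hs.le (n := 6) (by norm_num)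
    linarith
  · exact h
  · have h2 := pow_lt_pow_left₀ h hu.le (n := 2) (by norm_num)
    have h6 := pow_lt_pow_left₀ h hu.le (n := 6) (by norm_num)
    linarith

/-- The radius of the circle through `(u, u³)`. -/
lemma sqrt_sq_add_pow_six (u : ℝ) (hu : 0 < u) :
    √(u ^ 2 + u ^ 6) = u * √(1 + (u ^ 2) ^ 2) := by
  rw [show u ^ 2 + u ^ 6 = u ^ 2 * (1 + (u ^ 2) ^ 2) by ring, Real.sqrt_mul (by positivity),
    Real.sqrt_sq hu.le]

/-- Explicit form of the first-order Melnikov function for degree-1 perturbations,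
after the change of variable `h = u² + u⁶`. -/
theorem MelF_deg_one_explicit (σ : ℝ → ℝ)
    (hσ : ∀ h : ℝ, 0 < h → 0 < σ h ∧ (σ h) ^ 2 + (σ h) ^ 6 = h)
    (ap00 ap10 ap01 bp00 bp10 bp01 am00 am10 am01 bm00 bm10 bm01 : ℝ) :
    ∀ u : ℝ, 0 < u →
      MelF σ
        (fun x y => ap00 + ap10 * x + ap01 * y)
        (fun x y => bp00 + bp10 * x + bp01 * y)
        (fun x y => am00 + am10 * x + am01 * y)
        (fun x y => bm00 + bm10 * x + bm01 * y)
        (u ^ 2 + u ^ 6) =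
        2 * (bp00 - bm00) * u +
          (Real.pi / 2) * (bp01 + ap10 + bm01 + am10) * (u ^ 2 + u ^ 6) +
          2 * (am00 - ap00) * u ^ 3 := by
  intro u hu
  have hcos : √(u ^ 2 + u ^ 6) * Real.cos (tau σ (u ^ 2 + u ^ 6)) = u := by
    rw [tau, sigma_eq σ hσ u hu, sqrt_sq_add_pow_six u hu, Real.cos_arctan]
    have : √(1 + (u ^ 2) ^ 2) ≠ 0 := by positivity
    field_simp
  have hsin : √(u ^ 2 + u ^ 6) * Real.sin (tau σ (u ^ 2 + u ^ 6)) = u ^ 3 := by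
    rw [tau, sigma_eq σ hσ u hu, sqrt_sq_add_pow_six u hu, Real.sin_arctan]
    have : √(1 + (u ^ 2) ^ 2) ≠ 0 := by positivity
    field_simp
  have hsq : √(u ^ 2 + u ^ 6) * √(u ^ 2 + u ^ 6) = u ^ 2 + u ^ 6 :=
    Real.mul_self_sqrt (by positivity)
  unfold MelF
  generalize tau σ (u ^ 2 + u ^ 6) = t at *
  generalize √(u ^ 2 + u ^ 6) = r at *
  have hm := integral_half_period_s17 r am00 am10 am01 bm00 bm10 bm01 (t - Real.pi)
  rw [sub_add_cancel, Real.cos_sub_pi, Real.sin_sub_pi] at hm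
  rw [integral_half_period_s17, hm]
  linear_combination 2 * (bp00 - bm00) * hcos + 2 * (am00 - ap00) * hsin +
    (Real.pi / 2) * (bp01 + ap10 + bm01 + am10) * hsq
end

section
/- There exist real numbers a₁, …, a₇ such that the polynomial f(u) = a₁u + a₂u² + a₃u³ + a₄u⁵ + a₅u⁆ + a₆u⁷ + a₇u⁹, with a₅ the coefficient of u⁶, has at least 6 simple roots in (0,∞), i.e., at least 6 points u₀ > 0 with f(u₀) = 0 and f′(u₀) ≠ 0. -/
/-! The seven coefficients are, up to scaling, the unique solution of the homogeneous
`6 × 7` linear system expressing that the combination vanishes at `1, 2, 3, 4, 5, 6`.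
The derivative is nonzero at each of these points, as direct evaluation shows. This agrees
with Descartes' rule of signs: the seven coefficients alternate in sign, so six is the
largest possible number of positive roots counted with multiplicity, and the six roots
are therefore all simple. -/

/-- There is a linear combination of the monomials `u, u², u³, u⁵, u⁶, u⁷, u⁹` with
at least 6 simple roots in `(0,∞)`. -/
theorem chebyshev_monomials_six_simple_roots :
    ∃ a₁ a₂ a₃ a₄ a₅ a₆ a₇ : ℝ, ∃ S : Finset ℝ, 6 ≤ S.card ∧
      ∀ u₀ ∈ S, 0 < u₀ ∧
        a₁ * u₀ + a₂ * u₀ ^ 2 + a₃ * u₀ ^ 3 + a₄ * u₀ ^ 5 + a₅ * u₀ ^ 6 +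
            a₆ * u₀ ^ 7 + a₇ * u₀ ^ 9 = 0 ∧
        deriv (fun u => a₁ * u + a₂ * u ^ 2 + a₃ * u ^ 3 + a₄ * u ^ 5 + a₅ * u ^ 6 +
            a₆ * u ^ 7 + a₇ * u ^ 9) u₀ ≠ 0 := by
  refine ⟨31680, (-62496), 35132, (-6111), 2016, (-222), 1, {1, 2, 3, 4, 5, 6}, ?_, ?_⟩
  · norm_num
  · intro x hx
    have hd : HasDerivAt (fun u : ℝ => 31680 * u + (-62496) * u ^ 2 + 35132 * u ^ 3 +
          (-6111) * u ^ 5 + 2016 * u ^ 6 + (-222) * u ^ 7 + 1 * u ^ 9)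
        (31680 * 1 + (-62496) * (2 * x ^ 1) + 35132 * (3 * x ^ 2) +
          (-6111) * (5 * x ^ 4) + 2016 * (6 * x ^ 5) + (-222) * (7 * x ^ 6) + 1 * (9 * x ^ 8)) x := by
      simpa using ((((((((hasDerivAt_id x).const_mul (31680 : ℝ)).fun_add
        ((hasDerivAt_pow 2 x).const_mul (-62496 : ℝ))).fun_add
        ((hasDerivAt_pow 3 x).const_mul (35132 : ℝ))).fun_add
        ((hasDerivAt_pow 5 x).const_mul (-6111 : ℝ))).fun_add
        ((hasDerivAt_pow 6 x).const_mul (2016 : ℝ))).fun_add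
        ((hasDerivAt_pow 7 x).const_mul (-222 : ℝ))).fun_add
        ((hasDerivAt_pow 9 x).const_mul (1 : ℝ)))
    rw [hd.deriv]
    simp only [Finset.mem_insert, Finset.mem_singleton] at hx
    rcases hx with rfl | rfl | rfl | rfl | rfl | rfl <;> norm_num
end
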